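/- arXiv:2510.04770 — 9 statements merged into one kernel-verified Lean document; each statement's English description precedes it below -/
import Mathlib

section
/- Let (Ω, μ) be a probability space, let m ≥ 1 be a natural number, and let γ : Ω → ℝ be a nonnegative measurable function such that μ({ω : γ(ω) ≥ x}) ≤ 2·exp(−2·m·x²) for every real x ≥ 0. Then the integral ∫_Ω exp((2m−1)·γ(ω)²) dμ(ω) is at most 4m. -/
open MeasureTheory
open scoped ENNReal

/-- Moment bound from a Chernoff-type tail bound: if `μ(γ ≥ x) ≤ 2·exp(−2mx²)` for all
`x ≥ 0`, then `∫ exp((2m−1)γ²) dμ ≤ 4m`. -/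
theorem tail_bound_implies_moment_bound
    {Ω : Type*} [MeasurableSpace Ω] (μ : Measure Ω) [IsProbabilityMeasure μ]
    (m : ℕ) (hm : 1 ≤ m)
    (γ : Ω → ℝ) (hmeas : Measurable γ) (hnn : ∀ ω, 0 ≤ γ ω)
    (htail : ∀ x : ℝ, 0 ≤ x →
      μ {ω | x ≤ γ ω} ≤ ENNReal.ofReal (2 * Real.exp (-2 * (m : ℝ) * x ^ 2))) :
    ∫⁻ ω, ENNReal.ofReal (Real.exp ((2 * (m : ℝ) - 1) * (γ ω) ^ 2)) ∂μ
      ≤ ((4 * m : ℕ) : ℝ≥0∞) := by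
  have hm1 : (1 : ℝ) ≤ m := by exact_mod_cast hm
  obtain ⟨c, hc⟩ : ∃ c : ℝ, c = 2 * (m : ℝ) - 1 := ⟨_, rfl⟩
  have hc0 : 0 < c := by linarith
  rw [← hc]
  rw [lintegral_eq_lintegral_meas_le μ
    (Filter.Eventually.of_forall fun ω => (Real.exp_pos _).le)
    (by fun_prop)]
  have hu : Set.Ioi (0 : ℝ) = Set.Ioc 0 1 ∪ Set.Ioi 1 :=
    (Set.Ioc_union_Ioi_eq_Ioi zero_le_one).symm
  rw [hu]
  refine (lintegral_union_le _ _ _).trans ?_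
  have h1 : ∫⁻ t in Set.Ioc (0 : ℝ) 1, μ {a | t ≤ Real.exp (c * γ a ^ 2)} ≤ 1 := by
    refine (lintegral_mono (g := fun _ => 1) fun t => prob_le_one).trans ?_
    simp
  have ha : -(2 * (m : ℝ)) / c < -1 := by
    rw [div_lt_iff₀ hc0]; linarith
  have h2 : ∫⁻ t in Set.Ioi (1 : ℝ), μ {a | t ≤ Real.exp (c * γ a ^ 2)}
      ≤ ENNReal.ofReal (2 * c) := by
    calc _ ≤ ∫⁻ t in Set.Ioi (1 : ℝ), ENNReal.ofReal (2 * t ^ (-(2 * (m : ℝ)) / c)) := by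
          refine setLIntegral_mono' measurableSet_Ioi fun t ht => ?_
          have ht1 : (1 : ℝ) < t := ht
          have ht0 : 0 < t := by linarith
          have hl : 0 ≤ Real.log t / c := div_nonneg (Real.log_nonneg ht1.le) hc0.le
          refine (measure_mono ?_).trans ((htail (Real.sqrt (Real.log t / c))
            (Real.sqrt_nonneg _)).trans_eq ?_)
          · intro ω hω
            have h := (Real.log_le_iff_le_exp ht0).2 hω
            refine Real.sqrt_le_iff.2 ⟨hnn ω, ?_⟩
            rw [div_le_iff₀ hc0]; linarith
          · rw [Real.sq_sqrt hl, Real.rpow_def_of_pos ht0]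
            congr 3
            ring
      _ = ENNReal.ofReal (∫ t in Set.Ioi (1 : ℝ), 2 * t ^ (-(2 * (m : ℝ)) / c)) := by
          refine (ofReal_integral_eq_lintegral_ofReal
            ((integrableOn_Ioi_rpow_of_lt ha one_pos).const_mul 2) ?_).symm
          refine (ae_restrict_iff' measurableSet_Ioi).2 (Filter.Eventually.of_forall fun t ht => ?_)
          have ht1 : (1 : ℝ) < t := ht
          have ht0 : 0 < t := by linarith
          show (0 : ℝ) ≤ _
          positivity
      _ = ENNReal.ofReal (2 * c) := by
          rw [integral_const_mul, integral_Ioi_rpow_of_lt ha one_pos, Real.one_rpow]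
          have : -(2 * (m : ℝ)) / c + 1 = -1 / c := by
            field_simp
            linarith
          rw [this]
          congr 2
          field_simp
  refine (add_le_add h1 h2).trans ?_
  rw [← ENNReal.ofReal_one, ← ENNReal.ofReal_add zero_le_one (by linarith),
    ← ENNReal.ofReal_natCast]
  apply ENNReal.ofReal_le_ofReal
  push_cast
  linarith
end

section
/- Let (Ω, μ) be a probability space, m ≥ 1 a natural number, δ ∈ (0,1] a real number, I a finite index set, S a probability mass function on I, and for each i ∈ I let γ_i : Ω → ℝ be a nonnegative measurable function such that μ({ω : γ_i(ω) ≥ x}) ≤ 2·exp(−2·m·x²) for every real x ≥ 0. Then μ({ω : ∑_{i∈I} S i · exp((2m−1)·γ_i(ω)²) ≥ 4m/δ}) ≤ δ. -/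
open MeasureTheory
open scoped ENNReal

lemma exp_moment_aux {Ω : Type*} [MeasurableSpace Ω] (μ : Measure Ω) [IsProbabilityMeasure μ]
    (m : ℕ) (hm : 1 ≤ m) (g : Ω → ℝ) (hmeas : Measurable g) (hnn : ∀ ω, 0 ≤ g ω)
    (htail : ∀ x : ℝ, 0 ≤ x →
      μ {ω | x ≤ g ω} ≤ ENNReal.ofReal (2 * Real.exp (-2 * (m : ℝ) * x ^ 2))) :
    ∫⁻ ω, ENNReal.ofReal (Real.exp ((2 * (m : ℝ) - 1) * (g ω) ^ 2)) ∂μ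
      ≤ ENNReal.ofReal (4 * (m : ℝ)) := by
  have hm' : (1 : ℝ) ≤ m := by exact_mod_cast hm
  obtain ⟨a, ha⟩ : ∃ a : ℝ, a = 2 * (m : ℝ) - 1 := ⟨_, rfl⟩
  have ha0 : 0 < a := by linarith
  have h2m : 2 * (m : ℝ) = a + 1 := by linarith
  rw [← ha]
  rw [lintegral_eq_lintegral_meas_le μ (Filter.Eventually.of_forall fun ω => (Real.exp_pos _).le)
    (by fun_prop)]
  have hs : Set.Ioi (0 : ℝ) = Set.Ioc 0 1 ∪ Set.Ioi 1 :=
    (Set.Ioc_union_Ioi_eq_Ioi zero_le_one).symm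
  have hexp : -((a + 1) / a) < -1 := by
    rw [neg_lt_neg_iff, lt_div_iff₀ ha0]; linarith
  rw [hs]
  refine (lintegral_union_le _ _ _).trans ?_
  have h1 : ∫⁻ t in Set.Ioc (0 : ℝ) 1, μ {ω | t ≤ Real.exp (a * g ω ^ 2)} ≤ ENNReal.ofReal 1 := by
    calc _ ≤ ∫⁻ t in Set.Ioc (0 : ℝ) 1, 1 := lintegral_mono fun t => prob_le_one
      _ ≤ _ := by simp
  have h2 : ∫⁻ t in Set.Ioi (1 : ℝ), μ {ω | t ≤ Real.exp (a * g ω ^ 2)}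
      ≤ ENNReal.ofReal (2 * a) := by
    have hb : ∀ t ∈ Set.Ioi (1 : ℝ), μ {ω | t ≤ Real.exp (a * g ω ^ 2)}
        ≤ ENNReal.ofReal (2 * t ^ (-((a + 1) / a))) := by
      intro t ht
      have ht1 : (1 : ℝ) < t := ht
      have ht0 : 0 < t := by linarith
      have hl : 0 < Real.log t := Real.log_pos ht1
      refine (measure_mono ?_).trans ((htail (Real.sqrt (Real.log t / a)) (Real.sqrt_nonneg _)).trans
        (le_of_eq ?_))
      · intro ω hω
        have h : t ≤ Real.exp (a * g ω ^ 2) := hω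
        have h' := (Real.log_le_iff_le_exp ht0).2 h
        refine (Real.sqrt_le_left (hnn ω)).2 ?_
        rw [div_le_iff₀ ha0]; linarith
      · rw [Real.sq_sqrt (by positivity), Real.rpow_def_of_pos ht0]
        congr 3
        rw [neg_mul, h2m]
        field_simp
    refine (setLIntegral_mono' measurableSet_Ioi hb).trans ?_
    rw [← ofReal_integral_eq_lintegral_ofReal
      ((integrableOn_Ioi_rpow_of_lt hexp one_pos).const_mul 2)]
    · rw [integral_const_mul, integral_Ioi_rpow_of_lt hexp one_pos]
      apply le_of_eq
      congr 2
      have : -((a + 1) / a) + 1 = -(1 / a) := by field_simp; ring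
      rw [this, Real.one_rpow]
      field_simp
    · refine (ae_restrict_iff' measurableSet_Ioi).2 (Filter.Eventually.of_forall fun t ht => ?_)
      have ht1 : (1 : ℝ) < t := ht
      have ht0 : 0 < t := by linarith
      simp only [Pi.zero_apply]
      positivity
  refine (add_le_add h1 h2).trans ?_
  rw [← ENNReal.ofReal_add (by norm_num) (by linarith)]
  exact ENNReal.ofReal_le_ofReal (by linarith)

/-- Lemma 2: with probability at least `1 − δ`,
`∑ i, S i · exp((2m−1)·γ_i²) ≤ 4m/δ`. -/
theorem weighted_exp_moment_markov_bound
    {Ω : Type*} [MeasurableSpace Ω] (μ : Measure Ω) [IsProbabilityMeasure μ]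
    {I : Type*} [Fintype I]
    (m : ℕ) (hm : 1 ≤ m)
    (δ : ℝ) (hδ0 : 0 < δ) (hδ1 : δ ≤ 1)
    (S : I → ℝ) (hS0 : ∀ i, 0 ≤ S i) (hS1 : ∑ i, S i = 1)
    (γ : I → Ω → ℝ) (hmeas : ∀ i, Measurable (γ i)) (hnn : ∀ i ω, 0 ≤ γ i ω)
    (htail : ∀ i, ∀ x : ℝ, 0 ≤ x →
      μ {ω | x ≤ γ i ω} ≤ ENNReal.ofReal (2 * Real.exp (-2 * (m : ℝ) * x ^ 2))) :
    μ {ω | 4 * (m : ℝ) / δ ≤ ∑ i, S i * Real.exp ((2 * (m : ℝ) - 1) * (γ i ω) ^ 2)}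
      ≤ ENNReal.ofReal δ := by
  have hm' : (1 : ℝ) ≤ m := by exact_mod_cast hm
  have hE : ∫⁻ ω, ENNReal.ofReal (∑ i, S i * Real.exp ((2 * (m : ℝ) - 1) * (γ i ω) ^ 2)) ∂μ
      ≤ ENNReal.ofReal (4 * (m : ℝ)) := by
    have e : ∀ ω, ENNReal.ofReal (∑ i, S i * Real.exp ((2 * (m : ℝ) - 1) * (γ i ω) ^ 2))
        = ∑ i, ENNReal.ofReal (S i) *
          ENNReal.ofReal (Real.exp ((2 * (m : ℝ) - 1) * (γ i ω) ^ 2)) := by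
      intro ω
      rw [ENNReal.ofReal_sum_of_nonneg
        (fun i _ => mul_nonneg (hS0 i) (Real.exp_pos _).le)]
      exact Finset.sum_congr rfl fun i _ => ENNReal.ofReal_mul (hS0 i)
    simp_rw [e]
    have hme : ∀ i, Measurable fun ω =>
        ENNReal.ofReal (Real.exp ((2 * (m : ℝ) - 1) * (γ i ω) ^ 2)) := by
      intro i
      have := hmeas i
      fun_prop
    rw [lintegral_finsetSum _ (fun i _ => (hme i).const_mul _)]
    calc _ ≤ ∑ i, ENNReal.ofReal (S i) * ENNReal.ofReal (4 * (m : ℝ)) := by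
          refine Finset.sum_le_sum fun i _ => ?_
          rw [lintegral_const_mul _ (hme i)]
          gcongr
          exact exp_moment_aux μ m hm (γ i) (hmeas i) (hnn i) (htail i)
      _ = _ := by
          rw [← Finset.sum_mul, ← ENNReal.ofReal_sum_of_nonneg (fun i _ => hS0 i), hS1]
          simp
  have hpos : 0 < 4 * (m : ℝ) / δ := by positivity
  have hmF : Measurable fun ω =>
      ENNReal.ofReal (∑ i, S i * Real.exp ((2 * (m : ℝ) - 1) * (γ i ω) ^ 2)) := by
    fun_prop
  have hM := meas_ge_le_lintegral_div (μ := μ) hmF.aemeasurable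
    (ε := ENNReal.ofReal (4 * (m : ℝ) / δ)) (by simpa using hpos) ENNReal.ofReal_ne_top
  refine (measure_mono ?_).trans (hM.trans ((ENNReal.div_le_div_right hE _).trans (le_of_eq ?_)))
  · intro ω hω
    exact ENNReal.ofReal_le_ofReal hω
  · rw [← ENNReal.ofReal_div_of_pos hpos]
    congr 1
    field_simp
end

section
/- Let I be a finite index set, m ≥ 1 a natural number, δ ∈ (0,1], S a pmf on I with S i > 0 for every i ∈ I, E a pmf on I, and λ > 0 a real number. Suppose Δ : I → ℝ satisfies Δ i ≥ 0 and 2·(2m−1)·(Δ i)·exp((2m−1)·(Δ i)²) = λ·(E i)/(S i) for every i ∈ I, and that ∑_{i∈I} S i·exp((2m−1)·(Δ i)²) = 4m/δ. Then every γ : I → ℝ satisfying ∑_{i∈I} S i·exp((2m−1)·(γ i)²) ≤ 4m/δ also satisfies ∑_{i∈I} (E i)·(γ i) ≤ ∑_{i∈I} (E i)·(Δ i). -/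
/-- The Lagrange stationary point `Δ` maximizes `∑ i, E i · γ i` over all `γ`
satisfying the constraint `∑ i, S i · exp((2m−1)·γ_i²) ≤ 4m/δ`. -/
theorem lagrange_point_maximizes
    {I : Type*} [Fintype I]
    (m : ℕ) (hm : 1 ≤ m)
    (δ : ℝ) (hδ0 : 0 < δ) (hδ1 : δ ≤ 1)
    (S : I → ℝ) (hS0 : ∀ i, 0 < S i) (hS1 : ∑ i, S i = 1)
    (E : I → ℝ) (hE0 : ∀ i, 0 ≤ E i) (hE1 : ∑ i, E i = 1)
    (lam : ℝ) (hlam : 0 < lam)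
    (Δ : I → ℝ) (hΔ0 : ∀ i, 0 ≤ Δ i)
    (hstat : ∀ i, 2 * (2 * (m : ℝ) - 1) * Δ i * Real.exp ((2 * (m : ℝ) - 1) * (Δ i) ^ 2)
      = lam * E i / S i)
    (hsat : ∑ i, S i * Real.exp ((2 * (m : ℝ) - 1) * (Δ i) ^ 2) = 4 * (m : ℝ) / δ)
    (γ : I → ℝ)
    (hγ : ∑ i, S i * Real.exp ((2 * (m : ℝ) - 1) * (γ i) ^ 2) ≤ 4 * (m : ℝ) / δ) :
    ∑ i, E i * γ i ≤ ∑ i, E i * Δ i := by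
  have hm' : (1 : ℝ) ≤ m := by exact_mod_cast hm
  have hc : 0 ≤ 2 * (m : ℝ) - 1 := by linarith
  generalize 2 * (m : ℝ) - 1 = c at *
  have key : ∀ i, S i * Real.exp (c * (Δ i) ^ 2) + lam * (E i * γ i - E i * Δ i)
      ≤ S i * Real.exp (c * (γ i) ^ 2) := by
    intro i
    have h1 : lam * E i = S i * (2 * c * Δ i * Real.exp (c * (Δ i) ^ 2)) := by
      rw [hstat i, mul_div_cancel₀ _ (hS0 i).ne']
    have h2 : Real.exp (c * (γ i) ^ 2)
        = Real.exp (c * (Δ i) ^ 2) * Real.exp (c * (γ i) ^ 2 - c * (Δ i) ^ 2) := by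
      rw [← Real.exp_add]
      congr 1
      ring
    have h3 := Real.add_one_le_exp (c * (γ i) ^ 2 - c * (Δ i) ^ 2)
    have h4 : 1 + 2 * c * Δ i * (γ i - Δ i) ≤ Real.exp (c * (γ i) ^ 2 - c * (Δ i) ^ 2) := by
      have := mul_nonneg hc (sq_nonneg (γ i - Δ i))
      nlinarith
    have h5 := mul_le_mul_of_nonneg_left h4
      (mul_pos (hS0 i) (Real.exp_pos (c * (Δ i) ^ 2))).le
    rw [h2]
    calc _ = S i * Real.exp (c * (Δ i) ^ 2) + (lam * E i) * (γ i - Δ i) := by ring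
      _ = S i * Real.exp (c * (Δ i) ^ 2) * (1 + 2 * c * Δ i * (γ i - Δ i)) := by
        rw [h1]; ring
      _ ≤ _ := h5
      _ = _ := by ring
  have hs := Finset.sum_le_sum (fun i (_ : i ∈ Finset.univ) => key i)
  rw [Finset.sum_add_distrib, ← Finset.mul_sum, Finset.sum_sub_distrib, hsat] at hs
  have h6 : lam * (∑ i, E i * γ i - ∑ i, E i * Δ i) ≤ 0 := by linarith
  by_contra h
  have := mul_pos hlam (sub_pos.mpr (not_le.mp h))
  linarith
end

section
/- Let m ≥ 1 be a natural number and let s, ε, λ be real numbers with s > 0, ε ≥ s and λ ≥ e. If Δ ≥ 0 is a real number satisfying 2·(2m−1)·Δ·exp((2m−1)·Δ²) = λ·ε/s, then Δ ≤ √(ln(λ·ε/s)/(2m−1)). -/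
/-- Lemma 3: upper bound on the implicitly defined quantity `Δ_i(λ)`. -/
theorem delta_upper_bound
    (m : ℕ) (hm : 1 ≤ m) (s ε lam : ℝ) (hs : 0 < s) (hε : s ≤ ε)
    (hlam : Real.exp 1 ≤ lam) (Δ : ℝ) (hΔ : 0 ≤ Δ)
    (heq : 2 * (2 * (m : ℝ) - 1) * Δ * Real.exp ((2 * (m : ℝ) - 1) * Δ ^ 2)
      = lam * ε / s) :
    Δ ≤ Real.sqrt (Real.log (lam * ε / s) / (2 * (m : ℝ) - 1)) := by
  have hm' : (1 : ℝ) ≤ m := by exact_mod_cast hm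
  have hk : (1 : ℝ) ≤ 2 * (m : ℝ) - 1 := by linarith
  generalize 2 * (m : ℝ) - 1 = k at *
  have hL : Real.exp 1 ≤ lam * ε / s := by
    rw [le_div_iff₀ hs]
    have := Real.exp_pos 1
    exact mul_le_mul hlam hε hs.le (by linarith)
  have h1 : 1 ≤ 2 * k * Δ := by
    by_contra! h
    have h2 : k * Δ ^ 2 ≤ 1 := by nlinarith [mul_nonneg (by linarith : 0 ≤ k) hΔ]
    have h3 := Real.exp_le_exp.mpr h2
    have h4 := Real.exp_pos (k * Δ ^ 2)
    nlinarith
  have hpos : 0 < lam * ε / s := (Real.exp_pos 1).trans_le hL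
  apply Real.le_sqrt_of_sq_le
  rw [le_div_iff₀ (by linarith), Real.le_log_iff_exp_le hpos, ← heq, mul_comm (Δ ^ 2)]
  have h4 := Real.exp_pos (k * Δ ^ 2)
  nlinarith
end

section
/- Let m ≥ 1 be a natural number and let s, ε, λ be real numbers with s > 0, ε ≥ s and λ ≥ e. If Δ ≥ 0 is a real number satisfying 2·(2m−1)·Δ·exp((2m−1)·Δ²) = λ·ε/s, then Δ ≥ √((ln(λ·ε/s) − (1/2)·ln m − ln(ln(λ·ε/s)) − 2)/(2m−1)). -/
/-- Lemma 4: lower bound on the implicitly defined quantity `Δ_i(λ)`. -/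
theorem delta_lower_bound
    (m : ℕ) (hm : 1 ≤ m) (s ε lam : ℝ) (hs : 0 < s) (hε : s ≤ ε)
    (hlam : Real.exp 1 ≤ lam) (Δ : ℝ) (hΔ : 0 ≤ Δ)
    (heq : 2 * (2 * (m : ℝ) - 1) * Δ * Real.exp ((2 * (m : ℝ) - 1) * Δ ^ 2)
      = lam * ε / s) :
    Real.sqrt ((Real.log (lam * ε / s) - (1 / 2) * Real.log m
        - Real.log (Real.log (lam * ε / s)) - 2) / (2 * (m : ℝ) - 1)) ≤ Δ := by
  have hm1 : (1 : ℝ) ≤ m := by exact_mod_cast hm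
  have hX : Real.exp 1 ≤ lam * ε / s := by
    rw [le_div_iff₀ hs]
    have := Real.exp_pos 1
    exact mul_le_mul hlam hε hs.le (by linarith)
  have hXpos : 0 < lam * ε / s := lt_of_lt_of_le (Real.exp_pos 1) hX
  generalize lam * ε / s = X at *
  have hL1 : 1 ≤ Real.log X := (Real.le_log_iff_exp_le hXpos).2 hX
  obtain ⟨a, ha⟩ : ∃ a : ℝ, a = 2 * (m : ℝ) - 1 := ⟨_, rfl⟩
  rw [← ha] at heq ⊢
  have ha1 : 1 ≤ a := by linarith
  have hΔ0 : 0 < Δ := by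
    rcases hΔ.eq_or_lt with h | h
    · rw [← h] at heq
      simp at heq
      linarith
    · exact h
  have hp : 0 < 2 * a * Δ := by positivity
  have hlog : Real.log X = Real.log (2 * a * Δ) + a * Δ ^ 2 := by
    rw [← heq, Real.log_mul hp.ne' (Real.exp_pos _).ne', Real.log_exp]
  generalize Real.log X = L at *
  have hb : a * Δ ^ 2 ≤ L ^ 2 := by
    rcases le_total 1 (2 * a * Δ) with h | h
    · have := Real.log_nonneg h
      nlinarith
    · have h1 : a * Δ ^ 2 ≤ (a * Δ) ^ 2 := by
        have : 0 ≤ Δ ^ 2 := by positivity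
        nlinarith [mul_nonneg (mul_nonneg (by linarith : 0 ≤ a) this) (by linarith : 0 ≤ a - 1)]
      nlinarith
  have he : (8 : ℝ) ≤ Real.exp 4 := by
    have h2 : (3 : ℝ) ≤ Real.exp 2 := by linarith [Real.add_one_le_exp (2 : ℝ)]
    have : Real.exp 4 = Real.exp 2 * Real.exp 2 := by rw [← Real.exp_add]; norm_num
    nlinarith
  have hL0 : 0 < L := by linarith
  have hm0 : (0 : ℝ) < m := by linarith
  have key : (2 * a * Δ) ^ 2 ≤ m * L ^ 2 * Real.exp 4 := by
    calc (2 * a * Δ) ^ 2 = 4 * a * (a * Δ ^ 2) := by ring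
      _ ≤ 4 * a * L ^ 2 := by gcongr
      _ ≤ 8 * m * L ^ 2 := mul_le_mul_of_nonneg_right (by linarith) (by positivity)
      _ = m * L ^ 2 * 8 := by ring
      _ ≤ _ := by gcongr
  have hk := Real.log_le_log (by positivity) key
  rw [Real.log_mul (by positivity) (by positivity), Real.log_mul (by positivity) (by positivity),
    Real.log_exp, Real.log_pow, Real.log_pow] at hk
  push_cast at hk
  refine Real.sqrt_le_iff.2 ⟨hΔ, ?_⟩
  rw [div_le_iff₀ (by linarith)]
  linarith
end

section
/- Let I be a finite index set, m ≥ 1 a natural number, and δ ∈ (0,1] a real number with ln(1/δ) ≤ 2m. Let S be a pmf on I with S i > 0 for every i ∈ I, and let E be a pmf on I with D_KL(E‖S) ≤ 2m. Set x = 64·e²·m^{5/2}/δ. Suppose Δ : I → ℝ satisfies Δ i ≥ 0 and 2·(2m−1)·(Δ i)·exp((2m−1)·(Δ i)²) = x·(E i)/(S i) for every i ∈ I, and that x·(E i)/(S i) ≥ e for every i with E i > 0. Then ∑_{i∈I} S i·exp((2m−1)·(Δ i)²) ≥ 4m/δ. -/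
/-- KL divergence of pmfs on a finite index set:
`D_KL(P‖Q) = ∑_{i : P i > 0} P i · ln(P i / Q i)`. -/
noncomputable def klDiv {I : Type*} [Fintype I] (P Q : I → ℝ) : ℝ :=
  ∑ i ∈ Finset.univ.filter (fun i => 0 < P i), P i * Real.log (P i / Q i)

/-- Lemma 5: at `x = 64·e²·m^{5/2}/δ`, the value `h(x) = ∑ i, S i·exp((2m−1)·Δ_i(x)²)`
is at least `4m/δ` (hence `λ* ≤ 64·e²·m^{5/2}/δ`). -/
theorem lambda_star_bound
    {I : Type*} [Fintype I]
    (m : ℕ) (hm : 1 ≤ m)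
    (δ : ℝ) (hδ0 : 0 < δ) (hδ1 : δ ≤ 1) (hδm : Real.log (1 / δ) ≤ 2 * (m : ℝ))
    (S : I → ℝ) (hS0 : ∀ i, 0 < S i) (hS1 : ∑ i, S i = 1)
    (E : I → ℝ) (hE0 : ∀ i, 0 ≤ E i) (hE1 : ∑ i, E i = 1)
    (hKL : klDiv E S ≤ 2 * (m : ℝ))
    (x : ℝ) (hx : x = 64 * Real.exp 1 ^ 2 * (m : ℝ) ^ ((5 : ℝ) / 2) / δ)
    (Δ : I → ℝ) (hΔ0 : ∀ i, 0 ≤ Δ i)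
    (hstat : ∀ i, 2 * (2 * (m : ℝ) - 1) * Δ i * Real.exp ((2 * (m : ℝ) - 1) * (Δ i) ^ 2)
      = x * E i / S i)
    (hbig : ∀ i, 0 < E i → Real.exp 1 ≤ x * E i / S i) :
    4 * (m : ℝ) / δ ≤ ∑ i, S i * Real.exp ((2 * (m : ℝ) - 1) * (Δ i) ^ 2) := by
  have hM : (1 : ℝ) ≤ (m : ℝ) := by exact_mod_cast hm
  generalize hMdef : (m : ℝ) = M at *
  obtain ⟨a, ha⟩ : ∃ a, a = 2 * M - 1 := ⟨_, rfl⟩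
  rw [← ha] at hstat ⊢
  have haM : M ≤ a := by linarith
  have ha1 : 1 ≤ a := by linarith
  have ha2 : a ≤ 2 * M := by linarith
  have hM0 : 0 < M := by linarith
  have hp0 : 0 < M ^ ((5 : ℝ) / 2) := Real.rpow_pos_of_pos hM0 _
  have hx0 : 0 < x := by rw [hx]; positivity
  have hlogx : Real.log x ≤ 2 + 4.2 + 2.5 * (M - 1) + 2 * M := by
    have e : x = 2 ^ 6 * Real.exp 2 * M ^ ((5 : ℝ) / 2) * (1 / δ) := by
      have : Real.exp 2 = Real.exp 1 ^ 2 := by rw [← Real.exp_nat_mul]; norm_num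
      rw [hx, this]; ring
    rw [e, Real.log_mul (by positivity) (by positivity), Real.log_mul (by positivity) (by positivity),
      Real.log_mul (by positivity) (by positivity), Real.log_exp, Real.log_rpow hM0, Real.log_pow]
    have h1 := Real.log_two_lt_d9
    have h2 := Real.log_le_sub_one_of_pos hM0
    push_cast
    linarith
  have hxlow : 64 * 4 * M ^ 2 / δ ≤ x := by
    have h1 : M ^ 2 ≤ M ^ ((5 : ℝ) / 2) := by
      rw [← Real.rpow_natCast]
      exact Real.rpow_le_rpow_of_exponent_le hM (by norm_num)
    have h2 : (4 : ℝ) ≤ Real.exp 1 ^ 2 := by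
      have := Real.exp_one_gt_d9
      nlinarith
    rw [hx]
    gcongr
  have hu : ∀ i, 0 < E i → a * Δ i ^ 2 ≤ Real.log x + Real.log (E i / S i) := by
    intro i hi
    have hr : 0 < E i / S i := div_pos hi (hS0 i)
    rw [← Real.log_mul hx0.ne' hr.ne', ← mul_div_assoc]
    have hpos : 0 < x * E i / S i := by have := hS0 i; positivity
    rw [Real.le_log_iff_exp_le hpos]
    by_cases h : a * Δ i ^ 2 ≤ 1
    · exact (Real.exp_le_exp.2 h).trans (hbig i hi)
    · rw [← hstat i]
      push Not at h
      have h3 : 1 ≤ a * Δ i := by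
        have := hΔ0 i
        have : 0 ≤ a * Δ i := by positivity
        nlinarith
      have := Real.exp_pos (a * Δ i ^ 2)
      nlinarith
  have hsum : ∑ i, E i * (a * Δ i ^ 2) ≤ 11 * M := by
    have h1 : ∑ i, E i * (a * Δ i ^ 2) ≤
        ∑ i, (E i * Real.log x + if 0 < E i then E i * Real.log (E i / S i) else 0) := by
      apply Finset.sum_le_sum
      intro i _
      split_ifs with h
      · rw [← mul_add]
        exact mul_le_mul_of_nonneg_left (hu i h) h.le
      · have : E i = 0 := le_antisymm (not_lt.1 h) (hE0 i)
        simp [this]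
    rw [Finset.sum_add_distrib, ← Finset.sum_mul, hE1, ← Finset.sum_filter] at h1
    unfold klDiv at hKL
    linarith
  have hsum2 : ∑ i, E i * Δ i ^ 2 ≤ 11 := by
    have h1 : ∑ i, E i * (a * Δ i ^ 2) = a * ∑ i, E i * Δ i ^ 2 := by
      rw [Finset.mul_sum]; exact Finset.sum_congr rfl fun i _ => by ring
    rw [h1] at hsum
    by_contra h
    push Not at h
    nlinarith
  have hpt : ∀ i, x / (2 * a) / 128 * (48 * E i - E i * Δ i ^ 2) ≤
      S i * Real.exp (a * Δ i ^ 2) := by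
    intro i
    have hSi := hS0 i
    rcases (hE0 i).eq_or_lt with h | h
    · rw [← h]
      simp only [mul_zero, zero_mul, sub_zero]
      positivity
    · have h1 := hstat i
      rw [eq_div_iff hSi.ne'] at h1
      have hΔ : 0 < Δ i := by
        rcases (hΔ0 i).eq_or_lt with h' | h'
        · rw [← h'] at h1
          have := mul_pos hx0 h
          simp at h1
          rcases h1 with h1 | h1 <;> linarith
        · exact h'
      have h2 : S i * Real.exp (a * Δ i ^ 2) = x / (2 * a) / 128 * (E i * (128 / Δ i)) := by
        field_simp
        linarith
      rw [h2]
      have h3 : 48 - Δ i ^ 2 ≤ 128 / Δ i := by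
        rw [le_div_iff₀ hΔ]
        nlinarith [mul_nonneg (sq_nonneg (Δ i - 4)) (by linarith : 0 ≤ Δ i + 8)]
      have h4 := mul_le_mul_of_nonneg_left h3 h.le
      apply mul_le_mul_of_nonneg_left _ (by positivity)
      linarith
  have hfin := Finset.sum_le_sum (s := Finset.univ) fun i _ => hpt i
  refine le_trans ?_ hfin
  rw [← Finset.mul_sum, Finset.sum_sub_distrib, ← Finset.mul_sum, hE1]
  have hk : 64 * M / δ ≤ x / (2 * a) := by
    rw [le_div_iff₀ (by positivity)]
    refine le_trans ?_ hxlow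
    rw [div_mul_eq_mul_div]
    gcongr ?_ / δ
    nlinarith
  have hD : 0 < M / δ := by positivity
  have e1 : 64 * M / δ = 64 * (M / δ) := by ring
  have e2 : 4 * M / δ = 4 * (M / δ) := by ring
  rw [e1] at hk
  rw [e2]
  nlinarith
end

section
/- Let I be a finite index set, m ≥ 1 a natural number, and δ ∈ (0,1] a real number with ln(1/δ) ≤ 2m. Let S be a pmf on I with S i > 0 for every i ∈ I, and let E be a pmf on I with D_KL(E‖S) ≤ 2m. Suppose γ : I → ℝ satisfies γ i ≥ 0 for every i ∈ I and ∑_{i∈I} S i·exp((2m−1)·(γ i)²) ≤ 4m/δ. Then ∑_{i∈I} (E i)·(γ i) ≤ ∑_{i∈I} E i·√((ln((E i)/(S i)) + ln(1/δ) + (5/2)·ln m + 8)/(2m−1)), where terms with E i = 0 contribute 0. -/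
theorem aux_pt (x a B C : ℝ) (hx : 0 ≤ x) (hB : 1 ≤ B)
    (hC : B + 2 ≤ Real.exp (C - 1)) :
    x - Real.sqrt a ≤ (Real.exp (x ^ 2 - a + C) - 1) / (2 * B) - (B ^ 2 - a) / (4 * B ^ 3) := by
  have hB0 : 0 < B := by linarith
  have key : (Real.exp (x ^ 2 - a + C) - 1) / (2 * B) - (B ^ 2 - a) / (4 * B ^ 3)
      = (Real.exp (x ^ 2 - a + C) - 3 / 2 + a / (2 * B ^ 2)) / (2 * B) := by
    field_simp
    ring
  rw [key, le_div_iff₀ (by positivity)]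
  rcases le_or_gt 1 a with ha | ha
  · obtain ⟨s, hs, hs1, rfl⟩ : ∃ s : ℝ, Real.sqrt a = s ∧ 1 ≤ s ∧ a = s ^ 2 :=
      ⟨Real.sqrt a, rfl, Real.one_le_sqrt.mpr ha, (Real.sq_sqrt (by linarith)).symm⟩
    rw [hs]
    have hs0 : 0 < s := by linarith
    have h1 : x ^ 2 - s ^ 2 + 1 ≤ Real.exp (x ^ 2 - s ^ 2) := Real.add_one_le_exp _
    have hCC : B ≤ Real.exp C := by
      have : Real.exp (C - 1) ≤ Real.exp C := Real.exp_le_exp.mpr (by linarith)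
      linarith
    have h2 : Real.exp (x ^ 2 - s ^ 2 + C) ≥ Real.exp (x ^ 2 - s ^ 2) * B := by
      rw [Real.exp_add]
      exact mul_le_mul_of_nonneg_left hCC (Real.exp_pos _).le
    -- u = s / B
    obtain ⟨u, hu, rfl⟩ : ∃ u : ℝ, 0 < u ∧ s = u * B := ⟨s / B, by positivity, by field_simp⟩
    have h3 : (u * B) ^ 2 / (2 * B ^ 2) = u ^ 2 / 2 := by field_simp
    rw [h3]
    set e := Real.exp (x ^ 2 - (u * B) ^ 2)
    set F := Real.exp (x ^ 2 - (u * B) ^ 2 + C)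
    have h4 : 2 * (u * B) * (x - u * B) ≤ x ^ 2 - (u * B) ^ 2 := by
      nlinarith [sq_nonneg (x - u * B)]
    have he : 0 < e := Real.exp_pos _
    have h5 : e ≤ u * F := by
      have : u * (e * B) ≤ u * F := mul_le_mul_of_nonneg_left h2 hu.le
      nlinarith
    have h6 : 3 / 2 * u ≤ u ^ 3 / 2 + 1 := by
      nlinarith [mul_nonneg (by linarith : (0:ℝ) ≤ u + 2) (sq_nonneg (u - 1))]
    have h7 : u * ((x - u * B) * (2 * B)) ≤ u * (F - 3 / 2 + u ^ 2 / 2) := by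
      nlinarith
    exact le_of_mul_le_mul_left h7 hu
  · have hs := Real.sqrt_nonneg a
    have h1 : 1 + x ^ 2 ≤ Real.exp (x ^ 2) := by linarith [Real.add_one_le_exp (x ^ 2)]
    have h2 : 2 - a ≤ Real.exp (1 - a) := by linarith [Real.add_one_le_exp (1 - a)]
    have h3 : Real.exp (x ^ 2 - a + C) = Real.exp (x ^ 2) * Real.exp (1 - a) * Real.exp (C - 1) := by
      rw [← Real.exp_add, ← Real.exp_add]; congr 1; ring
    have h4 : (1 + x ^ 2) * (2 - a) * (B + 2) ≤ Real.exp (x ^ 2 - a + C) := by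
      rw [h3]
      gcongr
      linarith
    have h5 : 3 / 2 - a / (2 * B ^ 2) ≤ 2 * (2 - a) := by
      have : (1 - a) / (2 * B ^ 2) ≤ (1 - a) / 2 := by
        apply div_le_div_of_nonneg_left (by linarith) (by norm_num)
        nlinarith
      have h' : 0 < 1 / (2 * B ^ 2) := by positivity
      have h'' : (1 - a) / (2 * B ^ 2) = 1 / (2 * B ^ 2) - a / (2 * B ^ 2) := by ring
      linarith
    have h6 : (x - Real.sqrt a) * (2 * B) ≤ (1 + x ^ 2) * B := by
      nlinarith [sq_nonneg (x - 1), mul_nonneg hs hB0.le, mul_nonneg (sq_nonneg (x - 1)) hB0.le]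
    have h7 : (1 + x ^ 2) * B ≤ (1 + x ^ 2) * B * (2 - a) :=
      le_mul_of_one_le_right (by positivity) (by linarith)
    have h8 : 2 - a ≤ (1 + x ^ 2) * (2 - a) :=
      le_mul_of_one_le_left (by linarith) (by nlinarith [sq_nonneg x])
    nlinarith

/-- Deterministic core of Lemma 1: the event `∑ i, S i·exp((2m−1)·γ_i²) ≤ 4m/δ`
implies the PAC-Bayesian bound on `∑ i, E i·γ i`. -/
theorem pac_bayes_bound
    {I : Type*} [Fintype I]
    (m : ℕ) (hm : 1 ≤ m)
    (δ : ℝ) (hδ0 : 0 < δ) (hδ1 : δ ≤ 1) (hδm : Real.log (1 / δ) ≤ 2 * (m : ℝ))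
    (S : I → ℝ) (hS0 : ∀ i, 0 < S i) (hS1 : ∑ i, S i = 1)
    (E : I → ℝ) (hE0 : ∀ i, 0 ≤ E i) (hE1 : ∑ i, E i = 1)
    (hKL : klDiv E S ≤ 2 * (m : ℝ))
    (γ : I → ℝ) (hγ0 : ∀ i, 0 ≤ γ i)
    (hγ : ∑ i, S i * Real.exp ((2 * (m : ℝ) - 1) * (γ i) ^ 2) ≤ 4 * (m : ℝ) / δ) :
    ∑ i, E i * γ i ≤ ∑ i, E i * Real.sqrt ((Real.log (E i / S i) + Real.log (1 / δ)
      + (5 / 2) * Real.log m + 8) / (2 * (m : ℝ) - 1)) := by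
  have hm1 : (1 : ℝ) ≤ m := by exact_mod_cast hm
  have hm0 : (0 : ℝ) < m := by linarith
  set M : ℝ := (m : ℝ) with hM
  have hn : 0 < 2 * M - 1 := by linarith
  set n : ℝ := 2 * M - 1 with hnd
  set a : I → ℝ := fun i => Real.log (E i / S i) + Real.log (1 / δ) + (5 / 2) * Real.log M + 8
    with ha
  have hlog0 : 0 ≤ Real.log M := Real.log_nonneg hm1
  have hlog1 : Real.log M ≤ M - 1 := Real.log_le_sub_one_of_pos hm0
  set C : ℝ := 8 + (3 / 2) * Real.log M - Real.log 4 with hCd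
  have hC : 4 * M + 2 ≤ Real.exp (C - 1) := by
    have h1 : Real.exp (7 + Real.log M - Real.log 4) ≤ Real.exp (C - 1) :=
      Real.exp_le_exp.mpr (by rw [hCd]; linarith)
    have h2 : Real.exp (7 + Real.log M - Real.log 4) = Real.exp 7 * M / 4 := by
      rw [Real.exp_sub, Real.exp_add, Real.exp_log hm0, Real.exp_log (by norm_num)]
    have h3 : (128 : ℝ) ≤ Real.exp 7 := by
      have h : (2 : ℝ) ≤ Real.exp 1 := by linarith [Real.add_one_le_exp (1 : ℝ)]
      have h' : Real.exp 7 = Real.exp 1 ^ 7 := by rw [← Real.exp_nat_mul]; norm_num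
      rw [h']
      calc (128 : ℝ) = 2 ^ 7 := by norm_num
        _ ≤ _ := by gcongr
    nlinarith
  have hpt : ∀ i, Real.sqrt n * γ i - Real.sqrt (a i) ≤
      (Real.exp (n * γ i ^ 2 - a i + C) - 1) / (2 * (4 * M))
        - ((4 * M) ^ 2 - a i) / (4 * (4 * M) ^ 3) := by
    intro i
    have := aux_pt (Real.sqrt n * γ i) (a i) (4 * M) C
      (mul_nonneg (Real.sqrt_nonneg _) (hγ0 i)) (by linarith) hC
    rwa [mul_pow, Real.sq_sqrt hn.le] at this
  have hexp : ∑ i, E i * Real.exp (n * γ i ^ 2 - a i + C) ≤ 1 := by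
    have h1 : ∀ i, E i * Real.exp (n * γ i ^ 2 - a i + C)
        ≤ (S i * Real.exp (n * γ i ^ 2)) * (δ / (4 * M)) := by
      intro i
      have hSi := hS0 i
      rcases (hE0 i).eq_or_lt with h | h
      · rw [← h, zero_mul]; positivity
      · apply le_of_eq
        have : n * γ i ^ 2 - a i + C = n * γ i ^ 2 + Real.log (S i / E i * (δ / (4 * M))) := by
          rw [Real.log_mul (by positivity) (by positivity), Real.log_div hSi.ne' h.ne',
            Real.log_div hδ0.ne' (by positivity), Real.log_mul (by norm_num) hm0.ne']
          simp only [ha, hCd]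
          rw [Real.log_div h.ne' hSi.ne', Real.log_div one_ne_zero hδ0.ne', Real.log_one]
          ring
        rw [this, Real.exp_add, Real.exp_log (by positivity)]
        field_simp
    calc _ ≤ ∑ i, (S i * Real.exp (n * γ i ^ 2)) * (δ / (4 * M)) :=
          Finset.sum_le_sum fun i _ => h1 i
      _ = (∑ i, S i * Real.exp (n * γ i ^ 2)) * (δ / (4 * M)) := by rw [Finset.sum_mul]
      _ ≤ (4 * M / δ) * (δ / (4 * M)) := by gcongr
      _ = 1 := by field_simp
  have hEa : ∑ i, E i * a i ≤ (4 * M) ^ 2 := by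
    have h1 : ∑ i, E i * Real.log (E i / S i) = klDiv E S := by
      unfold klDiv
      rw [Finset.sum_filter]
      refine Finset.sum_congr rfl fun i _ => ?_
      split_ifs with h
      · rfl
      · have : E i = 0 := le_antisymm (not_lt.mp h) (hE0 i)
        rw [this, zero_mul]
    have h2 : ∑ i, E i * a i = klDiv E S
        + (∑ i, E i) * (Real.log (1 / δ) + (5 / 2) * Real.log M + 8) := by
      rw [← h1, Finset.sum_mul, ← Finset.sum_add_distrib]
      refine Finset.sum_congr rfl fun i _ => ?_
      simp only [ha]; ring
    rw [h2, hE1]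
    nlinarith
  have hsum : ∑ i, E i * (Real.sqrt n * γ i - Real.sqrt (a i)) ≤ 0 := by
    calc _ ≤ ∑ i, E i * ((Real.exp (n * γ i ^ 2 - a i + C) - 1) / (2 * (4 * M))
        - ((4 * M) ^ 2 - a i) / (4 * (4 * M) ^ 3)) :=
          Finset.sum_le_sum fun i _ => mul_le_mul_of_nonneg_left (hpt i) (hE0 i)
      _ = (∑ i, E i * Real.exp (n * γ i ^ 2 - a i + C) - ∑ i, E i) / (2 * (4 * M))
        - ((∑ i, E i) * (4 * M) ^ 2 - ∑ i, E i * a i) / (4 * (4 * M) ^ 3) := by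
          rw [Finset.sum_mul, ← Finset.sum_sub_distrib, ← Finset.sum_sub_distrib,
            Finset.sum_div, Finset.sum_div, ← Finset.sum_sub_distrib]
          refine Finset.sum_congr rfl fun i _ => ?_
          ring
      _ ≤ 0 := by
          rw [hE1]
          have h1 : (∑ i, E i * Real.exp (n * γ i ^ 2 - a i + C) - 1) / (2 * (4 * M)) ≤ 0 :=
            div_nonpos_of_nonpos_of_nonneg (by linarith) (by positivity)
          have h2 : 0 ≤ (1 * (4 * M) ^ 2 - ∑ i, E i * a i) / (4 * (4 * M) ^ 3) :=
            div_nonneg (by linarith) (by positivity)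
          linarith
  have hsn : 0 < Real.sqrt n := Real.sqrt_pos.mpr hn
  have hfin : ∑ i, E i * γ i - ∑ i, E i * Real.sqrt (a i / n)
      = (∑ i, E i * (Real.sqrt n * γ i - Real.sqrt (a i))) / Real.sqrt n := by
    rw [← Finset.sum_sub_distrib, Finset.sum_div]
    refine Finset.sum_congr rfl fun i _ => ?_
    rw [Real.sqrt_div' _ hn.le]
    field_simp
  have := div_nonpos_of_nonpos_of_nonneg hsum hsn.le
  rw [← hfin] at this
  linarith
end

section
/- Let I be a finite index set, m ≥ 1 a natural number, and δ ∈ (0,1] a real number with ln(1/δ) ≤ 2m. Let S and O be pmfs on I with S i > 0 and O i > 0 for every i ∈ I, and let E be a pmf on I with D_KL(E‖S) ≤ 2m. Suppose ∑_{i∈I} S i·exp((2m−1)·(ln((S i)/(O i)))²) ≤ 4m/δ. Then D_KL(E‖O) − D_KL(E‖S) ≤ √(D_KL(E‖S)/(2m−1)) + √((ln(1/δ) + (5/2)·ln m + 8)/(2m−1)); equivalently, D_KL(E‖O) ≤ D_KL(E‖S) + √(D_KL(E‖S)/(2m−1)) + √((ln(1/δ) + (5/2)·ln m + 8)/(2m−1)).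 -/
theorem klDiv_eq_univ {I : Type*} [Fintype I] (P Q : I → ℝ) (h : ∀ i, 0 ≤ P i) :
    klDiv P Q = ∑ i, P i * Real.log (P i / Q i) := by
  unfold klDiv
  rw [Finset.sum_filter]
  refine Finset.sum_congr rfl fun i _ => ?_
  split_ifs with hi
  · rfl
  · have : P i = 0 := le_antisymm (not_lt.mp hi) (h i)
    simp [this]

theorem sqrt_add_le_aux (a b : ℝ) : Real.sqrt (a + b) ≤ Real.sqrt a + Real.sqrt b := by
  apply Real.sqrt_le_iff.mpr
  have ha := Real.sqrt_nonneg a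
  have hb := Real.sqrt_nonneg b
  refine ⟨by positivity, ?_⟩
  have h1 : a ≤ Real.sqrt a ^ 2 := Real.sqrt_le_iff.mp le_rfl |>.2
  have h2 : b ≤ Real.sqrt b ^ 2 := Real.sqrt_le_iff.mp le_rfl |>.2
  nlinarith [mul_nonneg ha hb]

theorem pointwise_aux (e s x B : ℝ) (he : 0 ≤ e) (hs : 0 < s) (hB : 0 < B) :
    e * x ≤ e * Real.log (e / s) + e * Real.log B + s * Real.exp x / B - e := by
  rcases he.eq_or_lt with h | h
  · subst h
    simp only [zero_mul, zero_add, sub_zero]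
    positivity
  · have hpos : 0 < s * Real.exp x / (B * e) := by positivity
    have h1 := Real.log_le_sub_one_of_pos hpos
    have h2 : Real.log (s * Real.exp x / (B * e))
        = Real.log s + x - (Real.log B + Real.log e) := by
      rw [Real.log_div (by positivity) (by positivity), Real.log_mul hs.ne' (by positivity),
        Real.log_mul hB.ne' h.ne', Real.log_exp]
    rw [h2] at h1
    rw [Real.log_div h.ne' hs.ne']
    have h3 := mul_le_mul_of_nonneg_left h1 he
    have h4 : e * (s * Real.exp x / (B * e) - 1) = s * Real.exp x / B - e := by
      field_simp
    rw [h4] at h3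
    nlinarith

/-- Deterministic form of Theorem 1: on the high-probability event,
`D_KL(E‖O) − D_KL(E‖S) ≤ √(D_KL(E‖S)/(2m−1)) + √((ln(1/δ)+(5/2)ln m+8)/(2m−1))`,
equivalently `D_KL(E‖O) ≤ D_KL(E‖S) + √(D_KL(E‖S)/(2m−1)) + √((ln(1/δ)+(5/2)ln m+8)/(2m−1))`. -/
theorem open_environment_joint_distribution_bound
    {I : Type*} [Fintype I]
    (m : ℕ) (hm : 1 ≤ m)
    (δ : ℝ) (hδ0 : 0 < δ) (hδ1 : δ ≤ 1) (hδm : Real.log (1 / δ) ≤ 2 * (m : ℝ))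
    (S O E : I → ℝ)
    (hS0 : ∀ i, 0 < S i) (hS1 : ∑ i, S i = 1)
    (hO0 : ∀ i, 0 < O i) (hO1 : ∑ i, O i = 1)
    (hE0 : ∀ i, 0 ≤ E i) (hE1 : ∑ i, E i = 1)
    (hKL : klDiv E S ≤ 2 * (m : ℝ))
    (hev : ∑ i, S i * Real.exp ((2 * (m : ℝ) - 1) * (Real.log (S i / O i)) ^ 2)
      ≤ 4 * (m : ℝ) / δ) :
    klDiv E O - klDiv E S
      ≤ Real.sqrt (klDiv E S / (2 * (m : ℝ) - 1))
        + Real.sqrt ((Real.log (1 / δ) + (5 / 2) * Real.log m + 8) / (2 * (m : ℝ) - 1))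
    ∧ klDiv E O
      ≤ klDiv E S + Real.sqrt (klDiv E S / (2 * (m : ℝ) - 1))
        + Real.sqrt ((Real.log (1 / δ) + (5 / 2) * Real.log m + 8) / (2 * (m : ℝ) - 1)) := by
  have hm1 : (1 : ℝ) ≤ m := by exact_mod_cast hm
  have hk : 0 < 2 * (m : ℝ) - 1 := by linarith
  set k : ℝ := 2 * (m : ℝ) - 1 with hkdef
  set B : ℝ := 4 * (m : ℝ) / δ with hBdef
  have hB : 0 < B := by positivity
  have hdiff : klDiv E O - klDiv E S = ∑ i, E i * Real.log (S i / O i) := by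
    rw [klDiv_eq_univ E O hE0, klDiv_eq_univ E S hE0, ← Finset.sum_sub_distrib]
    refine Finset.sum_congr rfl fun i _ => ?_
    rcases (hE0 i).eq_or_lt with h | h
    · simp [← h]
    · rw [Real.log_div h.ne' (hO0 i).ne', Real.log_div h.ne' (hS0 i).ne',
        Real.log_div (hS0 i).ne' (hO0 i).ne']
      ring
  have hsq : (∑ i, E i * Real.log (S i / O i)) ^ 2 ≤ ∑ i, E i * (Real.log (S i / O i)) ^ 2 := by
    have h := (even_two.convexOn_pow (𝕜 := ℝ)).map_sum_le (t := Finset.univ) (w := E)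
      (p := fun i => Real.log (S i / O i)) (fun i _ => hE0 i) hE1 (fun i _ => Set.mem_univ _)
    simpa using h
  have hdv : k * ∑ i, E i * (Real.log (S i / O i)) ^ 2 ≤ klDiv E S + Real.log B := by
    have h := Finset.sum_le_sum fun i (_ : i ∈ Finset.univ) =>
      pointwise_aux (E i) (S i) (k * (Real.log (S i / O i)) ^ 2) B (hE0 i) (hS0 i) hB
    rw [Finset.sum_sub_distrib, Finset.sum_add_distrib, Finset.sum_add_distrib,
      ← Finset.sum_mul, ← Finset.sum_div, hE1, ← klDiv_eq_univ E S hE0] at h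
    have h2 := (div_le_one hB).mpr hev
    have h3 : k * ∑ i, E i * (Real.log (S i / O i)) ^ 2
        = ∑ i, E i * (k * (Real.log (S i / O i)) ^ 2) := by
      rw [Finset.mul_sum]
      exact Finset.sum_congr rfl fun i _ => by ring
    rw [h3]
    linarith
  have hlogm : 0 ≤ Real.log m := Real.log_nonneg hm1
  have hlogB : Real.log B ≤ Real.log (1 / δ) + (5 / 2) * Real.log m + 8 := by
    have h4 : Real.log 4 ≤ 4 - 1 := Real.log_le_sub_one_of_pos (by norm_num)
    have : Real.log B = Real.log 4 + Real.log m + Real.log (1 / δ) := by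
      rw [hBdef, div_eq_mul_one_div, Real.log_mul (by positivity) (by positivity),
        Real.log_mul (by positivity) (by positivity)]
    rw [this]
    linarith
  have main : klDiv E O - klDiv E S ≤ Real.sqrt (klDiv E S / k)
      + Real.sqrt ((Real.log (1 / δ) + (5 / 2) * Real.log m + 8) / k) := by
    rw [hdiff]
    refine le_trans ?_ (sqrt_add_le_aux _ _)
    apply Real.le_sqrt_of_sq_le
    refine hsq.trans ?_
    rw [← add_div, le_div_iff₀ hk]
    linarith
  exact ⟨main, by linarith⟩
end

section
/- Let Y_u be a nonempty finite set, Y_e ⊆ Y_u a nonempty subset, m ≥ 1 a natural number, and δ ∈ (0,1] and π ∈ (0,1] real numbers. Let p̂ be a pmf on Y_u with p̂ y = 0 for every y ∉ Y_e, let v be the uniform pmf on Y_e (v y = 1/|Y_e| for y ∈ Y_e), and let u be the uniform pmf on Y_u (u y = 1/|Y_u|). If ∑_{y∈Y_e, p̂ y > 0} p̂ y·ln((p̂ y)/(v y)) ≤ √((ln(1/π) + ln(1/δ))/(2m)), then ∑_{y∈Y_e, p̂ y > 0} p̂ y·ln((p̂ y)/(u y)) ≤ √((ln(1/π) + ln(1/δ))/(2m))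 − ln(|Y_e|/|Y_u|). -/
/-- Deterministic form of Theorem 2: if the KL divergence of the estimated posterior `p̂`
against the uniform distribution on the predicted class set `Y_e` is at most
`√((ln(1/π)+ln(1/δ))/(2m))`, then its KL divergence against the uniform distribution on
`Y_u` is at most `√((ln(1/π)+ln(1/δ))/(2m)) − ln(|Y_e|/|Y_u|)`. -/
theorem posterior_estimation_bound_uniform
    {Yu : Type*} [Fintype Yu] [Nonempty Yu]
    (Ye : Finset Yu) (hYe : Ye.Nonempty)
    (m : ℕ) (hm : 1 ≤ m)
    (δ π : ℝ) (hδ0 : 0 < δ) (hδ1 : δ ≤ 1) (hπ0 : 0 < π) (hπ1 : π ≤ 1)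
    (phat : Yu → ℝ) (h0 : ∀ y, 0 ≤ phat y) (h1 : ∑ y, phat y = 1)
    (hsupp : ∀ y ∉ Ye, phat y = 0)
    (hhyp : ∑ y ∈ Ye.filter (fun y => 0 < phat y),
        phat y * Real.log (phat y / (1 / (Ye.card : ℝ)))
      ≤ Real.sqrt ((Real.log (1 / π) + Real.log (1 / δ)) / (2 * (m : ℝ)))) :
    ∑ y ∈ Ye.filter (fun y => 0 < phat y),
        phat y * Real.log (phat y / (1 / (Fintype.card Yu : ℝ)))
      ≤ Real.sqrt ((Real.log (1 / π) + Real.log (1 / δ)) / (2 * (m : ℝ)))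
        - Real.log ((Ye.card : ℝ) / (Fintype.card Yu : ℝ)) := by
  have he : (0 : ℝ) < (Ye.card : ℝ) := by exact_mod_cast hYe.card_pos
  have hu : (0 : ℝ) < (Fintype.card Yu : ℝ) := by exact_mod_cast Fintype.card_pos
  have hsum : ∑ y ∈ Ye.filter (fun y => 0 < phat y), phat y = 1 := by
    rw [← h1]
    apply Finset.sum_subset (Finset.subset_univ _)
    intro y _ hy
    by_cases hye : y ∈ Ye
    · have hn : ¬ 0 < phat y := fun h => hy (Finset.mem_filter.mpr ⟨hye, h⟩)
      exact le_antisymm (not_lt.mp hn) (h0 y)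
    · exact hsupp y hye
  have key : ∑ y ∈ Ye.filter (fun y => 0 < phat y),
        phat y * Real.log (phat y / (1 / (Fintype.card Yu : ℝ)))
      = ∑ y ∈ Ye.filter (fun y => 0 < phat y),
        phat y * Real.log (phat y / (1 / (Ye.card : ℝ)))
        - Real.log ((Ye.card : ℝ) / (Fintype.card Yu : ℝ)) := by
    have hL : Real.log ((Ye.card : ℝ) / (Fintype.card Yu : ℝ))
        = ∑ y ∈ Ye.filter (fun y => 0 < phat y),
          phat y * Real.log ((Ye.card : ℝ) / (Fintype.card Yu : ℝ)) := by
      rw [← Finset.sum_mul, hsum, one_mul]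
    rw [hL, ← Finset.sum_sub_distrib]
    apply Finset.sum_congr rfl
    intro y hy
    have hp : 0 < phat y := (Finset.mem_filter.mp hy).2
    simp only [one_div, div_inv_eq_mul]
    rw [Real.log_mul hp.ne' hu.ne', Real.log_mul hp.ne' he.ne', Real.log_div he.ne' hu.ne']
    ring
  rw [key]
  linarith
end
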